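/- For all integers k ≥ 2 and r, s ≥ 1, one has R_{r+s}(k) − 1 ≥ (R_r(k) − 1) · (R_s(k) − 1). -/

import Mathlib

open Filter Topology
open scoped ENNReal

/-- `N` has the Ramsey property for the tuple `k`: every `r`-coloring of the
edges of the complete graph on `N` vertices admits a color `i` and a set of
`k i` vertices all of whose connecting edges have color `i`. -/
def ramseyProp {r : ℕ} (k : Fin r → ℕ) (N : ℕ) : Prop :=
  ∀ c : Sym2 (Fin N) → Fin r, ∃ i : Fin r, ∃ S : Finset (Fin N),
    S.card = k i ∧ ∀ u ∈ S, ∀ v ∈ S, u ≠ v → c s(u, v) = i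

/-- The multicolor Ramsey number `R(k 0, …, k (r-1))`: the least positive `N`
with the Ramsey property. -/
noncomputable def multiRamsey {r : ℕ} (k : Fin r → ℕ) : ℕ :=
  sInf {N | 0 < N ∧ ramseyProp k N}

/-- The diagonal multicolor Ramsey number `R_r(k)`. -/
noncomputable def diagRamsey (r k : ℕ) : ℕ :=
  multiRamsey (fun _ : Fin r => k)

/-- DC, the "decreasing conjecture". -/
def DC : Prop :=
  ∀ (r : ℕ), 2 ≤ r → ∀ k : Fin r → ℕ, (∀ l, 2 ≤ k l) →
    ∀ i j : Fin r, i ≠ j → 3 ≤ k i → k i ≤ k j →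
      multiRamsey (fun l => if l = i then k i - 1 else if l = j then k j + 1 else k l)
        ≤ multiRamsey k

/-!
If `c` and `d` are colorings of the complete graphs on `V` and `W` with disjoint palettes, color the
complete graph on `V × W` lexicographically: by `c` on first coordinates when these differ, and by
`d` on second coordinates otherwise. Each projection is then a graph homomorphism from the color
classes of its palette to the corresponding ones of `c` or `d`, and homomorphisms preserve
cliques because they are injective on them. So good colorings on `R(k) - 1` and `R(l) - 1` vertices
give one on the product. To conclude that this product is less than `R(k, l)` one needs Ramsey's
theorem, as otherwise `R(k, l)` could be the infimum of the empty set, which is `0`.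
-/

open Finset SimpleGraph

universe u

variable {V W ι κ : Type*}

/-- The graph formed by the edges of color `i`. As in `ramseyProp`, a coloring is a function on all
of `Sym2 V`; its values on the diagonal are ignored. -/
def colorGraph (c : Sym2 V → ι) (i : ι) : SimpleGraph V :=
  fromEdgeSet (c ⁻¹' {i})

theorem colorGraph_adj {c : Sym2 V → ι} {i : ι} {u v : V} :
    (colorGraph c i).Adj u v ↔ c s(u, v) = i ∧ u ≠ v :=
  fromEdgeSet_adj _

theorem ramseyProp_iff_exists_isNClique {r N : ℕ} {k : Fin r → ℕ} :
    ramseyProp k N ↔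
      ∀ c : Sym2 (Fin N) → Fin r, ∃ i S, (colorGraph c i).IsNClique (k i) S := by
  refine forall_congr' fun c => exists_congr fun i => exists_congr fun S => ?_
  rw [isNClique_iff, and_comm, isClique_iff]
  refine and_congr_left' (forall₂_congr fun u _ => forall₂_congr fun v _ =>
    forall_congr' fun huv => ?_)
  rw [colorGraph_adj, and_iff_left huv]

theorem exists_le_card_filter_colorGraph_adj [Fintype ι] (c : Sym2 V → ι) (N : ι → ℕ)
    {s : Finset V} {v : V} [∀ i, DecidablePred ((colorGraph c i).Adj v)] (hv : v ∈ s)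
    (hs : ∑ i, N i < #s) : ∃ i, N i ≤ #{w ∈ s | (colorGraph c i).Adj v w} := by
  classical
  have hfiber (i : ι) :
      {w ∈ s.erase v | c s(v, w) = i} = {w ∈ s | (colorGraph c i).Adj v w} := by
    ext w
    simp only [mem_filter, mem_erase, colorGraph_adj]
    tauto
  have hsum : ∑ i, N i ≤ ∑ i, #{w ∈ s | (colorGraph c i).Adj v w} := by
    simp only [← hfiber]
    rw [← card_eq_sum_card_fiberwise (f := fun w => c s(v, w)) fun _ _ => mem_coe.2 (mem_univ _),
      card_erase_of_mem hv]
    exact Nat.le_sub_one_of_lt hs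
  have : Nonempty ι := ⟨c s(v, v)⟩
  obtain ⟨i, -, hi⟩ := exists_le_of_sum_le univ_nonempty hsum
  exact ⟨i, hi⟩

/-- Ramsey's theorem, with the Erdős–Szekeres bound `∑ i, N i + 1`, where `N i` is a bound for `k`
with its entry `k i` lowered by one. -/
theorem exists_forall_exists_isNClique_colorGraph [Finite ι] (k : ι → ℕ) :
    ∃ N, ∀ ⦃V : Type u⦄ (c : Sym2 V → ι) (s : Finset V), N ≤ #s →
      ∃ i, ∃ t ⊆ s, (colorGraph c i).IsNClique (k i) t := by
  classical
  cases nonempty_fintype ι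
  induction k using WellFoundedLT.induction with
  | ind k ih =>
    by_cases hzero : ∃ i, k i = 0
    · obtain ⟨i, hi⟩ := hzero
      exact ⟨0, fun V c s _ => ⟨i, ∅, empty_subset s, isNClique_empty.2 hi⟩⟩
    push Not at hzero
    have hlt (i : ι) : Function.update k i (k i - 1) < k :=
      update_lt_self_iff.2 (Nat.sub_one_lt (hzero i))
    choose N hN using fun i => ih _ (hlt i)
    refine ⟨∑ i, N i + 1, fun V c s hs => ?_⟩
    obtain ⟨v, hv⟩ : s.Nonempty := card_pos.1 (by omega)
    obtain ⟨i, hi⟩ := exists_le_card_filter_colorGraph_adj c N hv hs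
    obtain ⟨j, t, ht, hclique⟩ := hN i c _ hi
    have hts : t ⊆ s := ht.trans (filter_subset _ _)
    obtain rfl | hji := eq_or_ne j i
    · rw [Function.update_self] at hclique
      have hinsert := hclique.insert fun w hw => (mem_filter.1 (ht hw)).2
      rw [Nat.sub_one_add_one (hzero j)] at hinsert
      exact ⟨j, insert v t, insert_subset hv hts, hinsert⟩
    · rw [Function.update_of_ne hji] at hclique
      exact ⟨j, t, hts, hclique⟩

theorem exists_pos_ramseyProp {r : ℕ} (k : Fin r → ℕ) : ∃ N, 0 < N ∧ ramseyProp k N := by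
  obtain ⟨N, hN⟩ := exists_forall_exists_isNClique_colorGraph k
  refine ⟨N + 1, N.succ_pos, ramseyProp_iff_exists_isNClique.2 fun c => ?_⟩
  obtain ⟨i, S, -, hS⟩ := hN c univ (by simp)
  exact ⟨i, S, hS⟩

theorem cliqueFree_of_hom {G : SimpleGraph V} {H : SimpleGraph W} {n : ℕ} (f : G →g H)
    (hH : H.CliqueFree n) : G.CliqueFree n := by
  rw [cliqueFree_iff] at hH ⊢
  exact ⟨fun g => hH.false ⟨f.comp g.toHom, Hom.injective_of_top_hom _⟩⟩

/-- A coloring witnessing a lower bound for the Ramsey number `R(k)`: for no color `i` is there a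
clique of size `k i` all of whose edges have color `i`. -/
def AvoidsCliques (c : Sym2 V → ι) (k : ι → ℕ) : Prop :=
  ∀ i, (colorGraph c i).CliqueFree (k i)

theorem not_ramseyProp_iff_exists_avoidsCliques {r N : ℕ} {k : Fin r → ℕ} :
    ¬ ramseyProp k N ↔ ∃ c : Sym2 (Fin N) → Fin r, AvoidsCliques c k := by
  simp only [ramseyProp_iff_exists_isNClique, AvoidsCliques, CliqueFree, not_forall, not_exists]

/-- The lexicographic product of two colorings, with disjoint palettes. -/
def lexColoring [DecidableEq V] (c : Sym2 V → ι) (d : Sym2 W → κ) (e : Sym2 (V × W)) : ι ⊕ κ :=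
  if (e.map Prod.fst).IsDiag then .inr (d (e.map Prod.snd)) else .inl (c (e.map Prod.fst))

theorem colorGraph_lexColoring_inl_adj [DecidableEq V] {c : Sym2 V → ι} {d : Sym2 W → κ} {i : ι}
    {p q : V × W} :
    (colorGraph (lexColoring c d) (.inl i)).Adj p q ↔ (colorGraph c i).Adj p.1 q.1 := by
  by_cases h : p.1 = q.1 <;> simp [colorGraph_adj, lexColoring, Prod.ext_iff, h]

theorem colorGraph_lexColoring_inr_adj [DecidableEq V] {c : Sym2 V → ι} {d : Sym2 W → κ} {j : κ}
    {p q : V × W} :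
    (colorGraph (lexColoring c d) (.inr j)).Adj p q ↔
      p.1 = q.1 ∧ (colorGraph d j).Adj p.2 q.2 := by
  by_cases h : p.1 = q.1 <;> simp [colorGraph_adj, lexColoring, Prod.ext_iff, h]

namespace AvoidsCliques

theorem comap {c : Sym2 V → ι} {k : ι → ℕ} (hc : AvoidsCliques c k) (f : W ↪ V) :
    AvoidsCliques (c ∘ Sym2.map f) k := fun i =>
  cliqueFree_of_hom (H := colorGraph c i)
    ⟨f, fun h => colorGraph_adj.2 ((colorGraph_adj.1 h).imp_right f.injective.ne)⟩ (hc i)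

theorem equiv_comp {c : Sym2 V → ι} {k : κ → ℕ} {e : ι ≃ κ} (hc : AvoidsCliques c (k ∘ e)) :
    AvoidsCliques (e ∘ c) k := by
  refine e.forall_congr_right.1 fun i => (hc i).anti fun u v h => ?_
  simpa only [colorGraph_adj, Function.comp_apply, e.apply_eq_iff_eq] using h

theorem lexColoring [DecidableEq V] {c : Sym2 V → ι} {d : Sym2 W → κ} {k : ι → ℕ} {l : κ → ℕ}
    (hc : AvoidsCliques c k) (hd : AvoidsCliques d l) :
    AvoidsCliques (lexColoring c d) (Sum.elim k l)
  | .inl i => cliqueFree_of_hom ⟨Prod.fst, colorGraph_lexColoring_inl_adj.1⟩ (hc i)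
  | .inr j => cliqueFree_of_hom ⟨Prod.snd, fun h => (colorGraph_lexColoring_inr_adj.1 h).2⟩ (hd j)

end AvoidsCliques

theorem append_const {α : Type*} {r s : ℕ} (a : α) :
    (Fin.append (fun _ : Fin r => a) fun _ : Fin s => a) = fun _ => a := by
  ext i
  induction i using Fin.addCases <;> simp

section RamseyNumbers

variable {r s M N : ℕ} {k : Fin r → ℕ} {l : Fin s → ℕ}

theorem ramseyProp.mono (hMN : M ≤ N) (hM : ramseyProp k M) : ramseyProp k N := by
  contrapose hM
  rw [not_ramseyProp_iff_exists_avoidsCliques] at hM ⊢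
  obtain ⟨c, hc⟩ := hM
  exact ⟨_, hc.comap (Fin.castLEEmb hMN)⟩

theorem not_ramseyProp_append_mul (hk : ¬ ramseyProp k M) (hl : ¬ ramseyProp l N) :
    ¬ ramseyProp (Fin.append k l) (M * N) := by
  rw [not_ramseyProp_iff_exists_avoidsCliques] at hk hl ⊢
  obtain ⟨c, hc⟩ := hk
  obtain ⟨d, hd⟩ := hl
  have hcomp : Fin.append k l ∘ finSumFinEquiv = Sum.elim k l := Fin.append_comp_sumElim
  have hprod : AvoidsCliques (lexColoring c d) (Fin.append k l ∘ finSumFinEquiv) :=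
    hcomp ▸ hc.lexColoring hd
  exact ⟨_, hprod.equiv_comp.comap finProdFinEquiv.symm.toEmbedding⟩

theorem lt_multiRamsey_of_not_ramseyProp (hN : ¬ ramseyProp k N) : N < multiRamsey k := by
  by_contra! hle
  exact hN ((Nat.sInf_mem (exists_pos_ramseyProp k)).2.mono hle)

theorem not_ramseyProp_multiRamsey_sub_one (hpos : 0 < multiRamsey k - 1) :
    ¬ ramseyProp k (multiRamsey k - 1) := fun h =>
  Nat.notMem_of_lt_sInf (Nat.sub_one_lt_of_lt (Nat.lt_of_sub_pos hpos)) ⟨hpos, h⟩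

end RamseyNumbers

theorem stmt1_general {r s : ℕ} (k : Fin r → ℕ) (l : Fin s → ℕ) :
    (multiRamsey k - 1) * (multiRamsey l - 1) ≤ multiRamsey (Fin.append k l) - 1 := by
  obtain hk | hk := (multiRamsey k - 1).eq_zero_or_pos
  · simp [hk]
  obtain hl | hl := (multiRamsey l - 1).eq_zero_or_pos
  · simp [hl]
  exact Nat.le_sub_one_of_lt <| lt_multiRamsey_of_not_ramseyProp <|
    not_ramseyProp_append_mul (not_ramseyProp_multiRamsey_sub_one hk)
      (not_ramseyProp_multiRamsey_sub_one hl)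

/-- `R_{r+s}(k) − 1 ≥ (R_r(k) − 1) · (R_s(k) − 1)`. -/
theorem stmt1 (k r s : ℕ) (hk : 2 ≤ k) (hr : 1 ≤ r) (hs : 1 ≤ s) :
    (diagRamsey r k - 1) * (diagRamsey s k - 1) ≤ diagRamsey (r + s) k - 1 := by
  simpa only [diagRamsey, append_const] using stmt1_general (fun _ : Fin r => k) fun _ : Fin s => k
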